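/- arXiv:2601.19848 — 3 statements merged into one kernel-verified Lean document; each statement's English description precedes it below -/
import Mathlib

section
/- Let G ⊆ P_n be a stabilizer group of dimension n − k with k ≥ 1 (so n > k) and distance d(G) ≥ 2. Then W(G) ≥ ⌈2n/(n−k)⌉. In particular, for all k ≥ 1 and d ≥ 2, W_opt(n, k, d) ≥ ⌈2n/(n−k)⌉. -/
open scoped Classical

noncomputable section

/-- Pauli strings modulo phase, indexed by a finite type. -/
abbrev PauliT (ι : Type) : Type := ι → ZMod 2 × ZMod 2

abbrev Pauli (n : ℕ) : Type := PauliT (Fin n)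

variable {ι : Type} [Fintype ι]

/-- Weight of a Pauli string. -/
def wt (v : PauliT ι) : ℕ := (Finset.univ.filter fun i => v i ≠ 0).card

/-- Support of a Pauli string. -/
def suppF (v : PauliT ι) : Finset ι := Finset.univ.filter fun i => v i ≠ 0

/-- Symplectic form encoding commutation. -/
def sympl (u v : PauliT ι) : ZMod 2 :=
  ∑ i, ((u i).1 * (v i).2 + (u i).2 * (v i).1)

/-- `G` is a stabilizer group (isotropic subspace). -/
def IsStabilizer (G : Submodule (ZMod 2) (PauliT ι)) : Prop :=
  ∀ u ∈ G, ∀ v ∈ G, sympl u v = 0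

/-- Membership in the symplectic dual `G^⊥`. -/
def inDual (G : Submodule (ZMod 2) (PauliT ι)) (v : PauliT ι) : Prop :=
  ∀ g ∈ G, sympl v g = 0

/-- Distance: minimum weight of an element of `G^⊥ \ G`, `⊤` if none exists. -/
def distG (G : Submodule (ZMod 2) (PauliT ι)) : ℕ∞ :=
  sInf ((fun v => (wt v : ℕ∞)) '' {v | inDual G v ∧ v ∉ G})

/-- `g` is an `𝔽₂`-basis (indexed family) of `G`. -/
def IsBasisFam {r : ℕ} (G : Submodule (ZMod 2) (PauliT ι)) (g : Fin r → PauliT ι) : Prop :=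
  LinearIndependent (ZMod 2) g ∧ Submodule.span (ZMod 2) (Set.range g) = G

/-- The weight of a stabilizer group: optimal maximum generator weight over bases. -/
def Wgt (G : Submodule (ZMod 2) (PauliT ι)) : ℕ∞ :=
  ⨅ (r : ℕ) (g : Fin r → PauliT ι) (_ : IsBasisFam G g),
    Finset.univ.sup fun i => (wt (g i) : ℕ∞)

/-- Optimal weight over all `[[n,k,d]]` stabilizer codes. -/
def Wopt (n k : ℕ) (d : ℕ∞) : ℕ∞ :=
  ⨅ (G : Submodule (ZMod 2) (Pauli n))
    (_ : IsStabilizer G ∧ Module.finrank (ZMod 2) ↥G = n - k ∧ distG G = d),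
    Wgt G

/-- Weight enumerator: number of elements of `G` of weight `j`. -/
def Aj (G : Submodule (ZMod 2) (PauliT ι)) (j : ℕ) : ℕ :=
  Nat.card {g : PauliT ι // g ∈ G ∧ wt g = j}

/-- A weight-optimal generating set. -/
def IsWeightOptimalBasis {r : ℕ} (G : Submodule (ZMod 2) (PauliT ι))
    (g : Fin r → PauliT ι) : Prop :=
  IsBasisFam G g ∧ Monotone (fun i => wt (g i)) ∧
    ∀ h : Fin r → PauliT ι, IsBasisFam G h → Monotone (fun i => wt (h i)) →
      ∀ i, wt (g i) ≤ wt (h i)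

/-- Set of average generator weights over all bases of `G`. -/
def WavgSet (G : Submodule (ZMod 2) (PauliT ι)) : Set ℚ :=
  {x | ∃ (r : ℕ) (g : Fin r → PauliT ι), IsBasisFam G g ∧
        x = (∑ i, (wt (g i) : ℚ)) / (r : ℚ)}

/-- Splitting of Pauli strings along a bipartition given by a predicate. -/
def splitEquiv (p : ι → Prop) :
    PauliT ι ≃ₗ[ZMod 2] PauliT {x // p x} × PauliT {x // ¬ p x} :=
  (LinearEquiv.funCongrLeft (ZMod 2) (ZMod 2 × ZMod 2) (Equiv.sumCompl p)).trans
    (LinearEquiv.sumArrowLequivProdArrow _ _ _ _)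

/-- Tensor product of subspaces along a bipartition. -/
def tensorAlong (p : ι → Prop)
    (GA : Submodule (ZMod 2) (PauliT {x // p x}))
    (GB : Submodule (ZMod 2) (PauliT {x // ¬ p x})) :
    Submodule (ZMod 2) (PauliT ι) :=
  (GA.prod GB).comap (splitEquiv p).toLinearMap

/-- Decomposability as a tensor product over a nontrivial bipartition. -/
def Decomposable (G : Submodule (ZMod 2) (PauliT ι)) : Prop :=
  ∃ p : ι → Prop, (∃ x, p x) ∧ (∃ x, ¬ p x) ∧
    ∃ (GA : Submodule (ZMod 2) (PauliT {x // p x}))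
      (GB : Submodule (ZMod 2) (PauliT {x // ¬ p x})),
      G = tensorAlong p GA GB

/-- Identification of `Pauli (n₁+n₂)` with `Pauli n₁ × Pauli n₂`. -/
def pauliSumEquiv (n₁ n₂ : ℕ) :
    Pauli (n₁ + n₂) ≃ₗ[ZMod 2] Pauli n₁ × Pauli n₂ :=
  (LinearEquiv.funCongrLeft (ZMod 2) (ZMod 2 × ZMod 2) finSumFinEquiv).trans
    (LinearEquiv.sumArrowLequivProdArrow _ _ _ _)

/-- Tensor product of stabilizer subspaces on `n₁` and `n₂` qubits. -/
def tensorFin {n₁ n₂ : ℕ} (G₁ : Submodule (ZMod 2) (Pauli n₁))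
    (G₂ : Submodule (ZMod 2) (Pauli n₂)) :
    Submodule (ZMod 2) (Pauli (n₁ + n₂)) :=
  (G₁.prod G₂).comap (pauliSumEquiv n₁ n₂).toLinearMap

/-!
Let `r` be the dimension of `G`, and fix a basis of `G` whose elements have weight at most `W`.
Call a qubit local if `G` contains a nonzero Pauli string supported on that qubit alone. Exchange
one such string for each of the `m` local qubits into the basis; its other `r - m` elements still
have weight at most `W`. If at most one of these acts on a nonlocal qubit `i`, say as `a`, then
`a` on qubit `i` commutes with all of `G`, so `d(G) ≥ 2` forces it into `G`, making `i` local.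
Hence every nonlocal qubit is covered at least twice, and `2(n - m) ≤ (r - m)W`. Moreover every
qubit is covered at least once, so `n ≤ rW`, which for `r < n` gives `W ≥ 2` and therefore `2n ≤
2m + (r - m)W ≤ rW`.
-/

lemma exists_finset_basis_between {K V : Type*} [DivisionRing K] [AddCommGroup V] [Module K V]
    {s t : Finset V} (hs : LinearIndepOn K id (s : Set V)) (hst : s ⊆ t) :
    ∃ b : Finset V, s ⊆ b ∧ b ⊆ t ∧ Submodule.span K (b : Set V) = Submodule.span K (t : Set V) ∧
      b.card = Module.finrank K (Submodule.span K (t : Set V)) := by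
  obtain ⟨b, hbt, hsb, htb, hb⟩ := exists_linearIndepOn_id_extension hs (Finset.coe_subset.mpr hst)
  lift b to Finset V using t.finite_toSet.subset hbt
  have hspan : Submodule.span K (b : Set V) = Submodule.span K (t : Set V) :=
    Submodule.span_eq_span (hbt.trans Submodule.subset_span) htb
  exact ⟨b, Finset.coe_subset.mp hsb, Finset.coe_subset.mp hbt, hspan,
    hspan ▸ (finrank_span_finset_eq_card hb).symm⟩

lemma mem_suppF {v : PauliT ι} {i : ι} : i ∈ suppF v ↔ v i ≠ 0 := by
  simp only [suppF, Finset.mem_filter, Finset.mem_univ, true_and]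

lemma suppF_single {i : ι} {a : ZMod 2 × ZMod 2} (ha : a ≠ 0) :
    suppF (Pi.single i a : PauliT ι) = {i} := by
  ext j
  by_cases hj : j = i <;> simp [mem_suppF, hj, ha]

lemma wt_single {i : ι} {a : ZMod 2 × ZMod 2} (ha : a ≠ 0) :
    wt (Pi.single i a : PauliT ι) = 1 :=
  (congrArg Finset.card (suppF_single ha)).trans (Finset.card_singleton i)

lemma card_mul_le_card_mul_of_wt_le {B : Finset (PauliT ι)} {S : Finset ι} {m W : ℕ}
    (hS : ∀ i ∈ S, m ≤ (B.filter fun v => v i ≠ 0).card) (hW : ∀ v ∈ B, wt v ≤ W) :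
    S.card * m ≤ B.card * W :=
  Finset.card_mul_le_card_mul (fun i (v : PauliT ι) => v i ≠ 0) hS fun v hv =>
    (Finset.card_le_card (Finset.filter_subset_filter _ S.subset_univ)).trans (hW v hv)

lemma sympl_single_left (i : ι) (a : ZMod 2 × ZMod 2) (u : PauliT ι) :
    sympl (Pi.single i a) u = a.1 * (u i).2 + a.2 * (u i).1 := by
  rw [sympl, Finset.sum_eq_single i]
  · simp
  · intro j _ hj
    simp [Pi.single_eq_of_ne hj]
  · simp

lemma sympl_single_left_eq_zero {i : ι} {a : ZMod 2 × ZMod 2} {u : PauliT ι}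
    (h : u i = 0 ∨ u i = a) : sympl (Pi.single i a) u = 0 := by
  rw [sympl_single_left]
  rcases h with h | h
  · simp [h]
  · rw [h, mul_comm a.2, CharTwo.add_self_eq_zero]

lemma sympl_add_right (v x y : PauliT ι) : sympl v (x + y) = sympl v x + sympl v y := by
  simp only [sympl, ← Finset.sum_add_distrib, Pi.add_apply, Prod.fst_add, Prod.snd_add]
  exact Finset.sum_congr rfl fun _ _ => by ring

lemma sympl_smul_right (c : ZMod 2) (v x : PauliT ι) : sympl v (c • x) = c * sympl v x := by
  simp only [sympl, Finset.mul_sum, Pi.smul_apply, Prod.smul_fst, Prod.smul_snd, smul_eq_mul]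
  exact Finset.sum_congr rfl fun _ _ => by ring

lemma inDual_span_of_forall_sympl_eq_zero {s : Set (PauliT ι)} {v : PauliT ι}
    (h : ∀ g ∈ s, sympl v g = 0) : inDual (Submodule.span (ZMod 2) s) v := by
  intro g hg
  induction hg using Submodule.span_induction with
  | mem x hx => exact h x hx
  | zero => simp [sympl]
  | add x y _ _ hx hy => rw [sympl_add_right, hx, hy, add_zero]
  | smul c x _ hx => rw [sympl_smul_right, hx, mul_zero]

lemma mem_of_inDual_of_wt_lt_distG {G : Submodule (ZMod 2) (PauliT ι)} {v : PauliT ι}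
    (hv : inDual G v) (hlt : (wt v : ℕ∞) < distG G) : v ∈ G := by
  by_contra hvG
  exact hlt.not_ge (sInf_le ⟨v, ⟨hv, hvG⟩, rfl⟩)

lemma single_mem_of_inDual {G : Submodule (ZMod 2) (PauliT ι)} (hd : 2 ≤ distG G) {i : ι}
    {a : ZMod 2 × ZMod 2} (ha : a ≠ 0) (h : inDual G (Pi.single i a)) : Pi.single i a ∈ G := by
  refine mem_of_inDual_of_wt_lt_distG h (lt_of_lt_of_le ?_ hd)
  rw [wt_single ha]
  exact Nat.one_lt_ofNat

/-- The qubits `i` such that `G` contains a nonzero Pauli string supported on `i` alone. -/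
def localQubits (G : Submodule (ZMod 2) (PauliT ι)) : Finset ι :=
  Finset.univ.filter fun i => ∃ a : ZMod 2 × ZMod 2, a ≠ 0 ∧ (Pi.single i a : PauliT ι) ∈ G

lemma mem_localQubits {G : Submodule (ZMod 2) (PauliT ι)} {i : ι} :
    i ∈ localQubits G ↔ ∃ a : ZMod 2 × ZMod 2, a ≠ 0 ∧ (Pi.single i a : PauliT ι) ∈ G := by
  simp only [localQubits, Finset.mem_filter, Finset.mem_univ, true_and]

lemma exists_linearIndepOn_localQubits (G : Submodule (ZMod 2) (PauliT ι)) :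
    ∃ s : Finset (PauliT ι), LinearIndepOn (ZMod 2) id (s : Set (PauliT ι)) ∧
      s.card = (localQubits G).card ∧
      ∀ v ∈ s, v ∈ G ∧ ∃ i ∈ localQubits G, suppF v = {i} := by
  have hchoice : ∀ i, ∃ a : ZMod 2 × ZMod 2,
      a ≠ 0 ∧ (i ∈ localQubits G → (Pi.single i a : PauliT ι) ∈ G) := fun i => by
    by_cases hi : i ∈ localQubits G
    · obtain ⟨a, ha, haG⟩ := mem_localQubits.mp hi
      exact ⟨a, ha, fun _ => haG⟩
    · exact ⟨1, one_ne_zero, fun h => absurd h hi⟩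
  choose a ha haG using hchoice
  have hli : LinearIndependent (ZMod 2) fun i => (Pi.single i (a i) : PauliT ι) :=
    Pi.linearIndependent_single_of_ne_zero ha
  refine ⟨(localQubits G).image fun i => Pi.single i (a i),
    hli.linearIndepOn_id.mono ?_, Finset.card_image_of_injective _ hli.injective, ?_⟩
  · rw [Finset.coe_image]
    exact Set.image_subset_range _ _
  · simp only [Finset.forall_mem_image]
    exact fun i hi => ⟨haG i hi, i, hi, suppF_single (ha i)⟩

section SpanningSet

variable {G : Submodule (ZMod 2) (PauliT ι)} {B : Finset (PauliT ι)} {W : ℕ}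

lemma exists_mem_apply_ne_zero (hd : 2 ≤ distG G)
    (hB : Submodule.span (ZMod 2) (B : Set (PauliT ι)) = G) (i : ι) : ∃ v ∈ B, v i ≠ 0 := by
  by_contra! hzero
  have hG : G ≤ LinearMap.ker (LinearMap.proj i) := hB ▸ Submodule.span_le.mpr hzero
  have hmem : (Pi.single i 1 : PauliT ι) ∈ G :=
    single_mem_of_inDual hd one_ne_zero fun g hg => sympl_single_left_eq_zero (.inl (hG hg))
  have hone : (Pi.single i 1 : PauliT ι) i = 0 := hG hmem
  rw [Pi.single_eq_same] at hone
  exact one_ne_zero hone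

lemma two_le_card_filter_of_notMem_localQubits (hd : 2 ≤ distG G)
    (hB : Submodule.span (ZMod 2) (B : Set (PauliT ι)) = G) {i : ι} (hi : i ∉ localQubits G) :
    2 ≤ (B.filter fun v => v i ≠ 0).card := by
  obtain ⟨u, huB, hu⟩ := exists_mem_apply_ne_zero hd hB i
  by_contra! hlt
  have huniq : ∀ v ∈ B, v i = 0 ∨ v i = u i := fun v hv => by
    by_cases hvi : v i = 0
    · exact .inl hvi
    · rw [Finset.card_le_one.mp (Nat.lt_succ_iff.mp hlt) v (Finset.mem_filter.mpr ⟨hv, hvi⟩)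
        u (Finset.mem_filter.mpr ⟨huB, hu⟩)]
      exact .inr rfl
  have hdual : inDual G (Pi.single i (u i)) :=
    hB ▸ inDual_span_of_forall_sympl_eq_zero fun v hv => sympl_single_left_eq_zero (huniq v hv)
  exact hi (mem_localQubits.mpr ⟨u i, hu, single_mem_of_inDual hd hu hdual⟩)

lemma card_le_card_mul_of_span_eq (hd : 2 ≤ distG G)
    (hB : Submodule.span (ZMod 2) (B : Set (PauliT ι)) = G) (hW : ∀ v ∈ B, wt v ≤ W) :
    Fintype.card ι ≤ B.card * W := by
  have hcover : ∀ i ∈ (Finset.univ : Finset ι), 1 ≤ (B.filter fun v => v i ≠ 0).card :=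
    fun i _ => by
      obtain ⟨v, hv, hvi⟩ := exists_mem_apply_ne_zero hd hB i
      exact Finset.card_pos.mpr ⟨v, Finset.mem_filter.mpr ⟨hv, hvi⟩⟩
  simpa only [mul_one, Finset.card_univ] using card_mul_le_card_mul_of_wt_le hcover hW

lemma card_compl_localQubits_mul_two_add_le (hd : 2 ≤ distG G)
    (hB : Submodule.span (ZMod 2) (B : Set (PauliT ι)) = G) (hW : ∀ v ∈ B, wt v ≤ W) :
    (localQubits G)ᶜ.card * 2 + (localQubits G).card * W ≤ Module.finrank (ZMod 2) G * W := by
  obtain ⟨s, hs, hscard, hsG⟩ := exists_linearIndepOn_localQubits G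
  have hspan : Submodule.span (ZMod 2) ((s ∪ B : Finset (PauliT ι)) : Set (PauliT ι)) = G := by
    rw [Finset.coe_union, Submodule.span_union, hB, sup_eq_right, Submodule.span_le]
    exact fun v hv => (hsG v hv).1
  obtain ⟨b, hsb, hbt, hb, hbcard⟩ :=
    exists_finset_basis_between hs (Finset.subset_union_left (s₂ := B))
  rw [hspan] at hb hbcard
  have hWb : ∀ v ∈ b \ s, wt v ≤ W := fun v hv => by
    obtain ⟨hvb, hvs⟩ := Finset.mem_sdiff.mp hv
    exact hW v ((Finset.mem_union.mp (hbt hvb)).resolve_left hvs)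
  have hcover : ∀ i ∈ (localQubits G)ᶜ, 2 ≤ ((b \ s).filter fun v => v i ≠ 0).card := by
    intro i hi
    rw [Finset.mem_compl] at hi
    refine (two_le_card_filter_of_notMem_localQubits hd hb hi).trans (Finset.card_le_card ?_)
    intro v hv
    obtain ⟨hvb, hvi⟩ := Finset.mem_filter.mp hv
    refine Finset.mem_filter.mpr ⟨Finset.mem_sdiff.mpr ⟨hvb, fun hvs => hi ?_⟩, hvi⟩
    obtain ⟨j, hj, hsupp⟩ := (hsG v hvs).2
    have hij : i = j := Finset.mem_singleton.mp (hsupp ▸ mem_suppF.mpr hvi)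
    exact hij ▸ hj
  calc (localQubits G)ᶜ.card * 2 + (localQubits G).card * W
      ≤ (b \ s).card * W + s.card * W :=
        Nat.add_le_add (card_mul_le_card_mul_of_wt_le hcover hWb) (by rw [hscard])
    _ = Module.finrank (ZMod 2) G * W := by
        rw [← add_mul, Finset.card_sdiff_add_card_eq_card hsb, hbcard]

lemma two_mul_card_le_finrank_mul (hd : 2 ≤ distG G)
    (hlt : Module.finrank (ZMod 2) G < Fintype.card ι)
    (hB : Submodule.span (ZMod 2) (B : Set (PauliT ι)) = G)
    (hBcard : B.card ≤ Module.finrank (ZMod 2) G) (hW : ∀ v ∈ B, wt v ≤ W) :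
    2 * Fintype.card ι ≤ Module.finrank (ZMod 2) G * W := by
  have hW2 : 2 ≤ W := by
    have hlt' : B.card * 1 < B.card * W := by
      rw [mul_one]
      exact hBcard.trans_lt (hlt.trans_le (card_le_card_mul_of_span_eq hd hB hW))
    exact Nat.lt_of_mul_lt_mul_left hlt'
  calc 2 * Fintype.card ι
      = (localQubits G)ᶜ.card * 2 + (localQubits G).card * 2 := by
        rw [← add_mul, Finset.card_compl_add_card, mul_comm]
    _ ≤ (localQubits G)ᶜ.card * 2 + (localQubits G).card * W := by gcongr
    _ ≤ Module.finrank (ZMod 2) G * W := card_compl_localQubits_mul_two_add_le hd hB hW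

end SpanningSet

lemma natCast_le_Wgt {G : Submodule (ZMod 2) (PauliT ι)} {c : ℕ}
    (h : ∀ (r : ℕ) (g : Fin r → PauliT ι) (W : ℕ),
      IsBasisFam G g → (∀ i, wt (g i) ≤ W) → c ≤ W) : (c : ℕ∞) ≤ Wgt G := by
  refine le_iInf fun r => le_iInf₂ fun g hg => ?_
  have hle : ∀ i, (wt (g i) : ℕ∞) ≤ Finset.univ.sup fun i => (wt (g i) : ℕ∞) :=
    fun i => Finset.le_sup (f := fun i => (wt (g i) : ℕ∞)) (Finset.mem_univ i)
  generalize (Finset.univ.sup fun i => (wt (g i) : ℕ∞)) = S at hle ⊢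
  induction S using ENat.recTopCoe with
  | top => exact le_top
  | coe W => exact_mod_cast h r g W hg fun i => by exact_mod_cast hle i

theorem Wgt_lower_bound_ceil_general (G : Submodule (ZMod 2) (PauliT ι))
    (hlt : Module.finrank (ZMod 2) G < Fintype.card ι) (hd : 2 ≤ distG G) :
    (⌈(2 * (Fintype.card ι : ℚ)) / (Module.finrank (ZMod 2) G : ℚ)⌉₊ : ℕ∞) ≤ Wgt G := by
  refine natCast_le_Wgt fun r g W hg hW => Nat.ceil_le.mpr ?_
  have hspan : Submodule.span (ZMod 2) ((Finset.univ.image g : Finset (PauliT ι)) :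
      Set (PauliT ι)) = G := by
    rw [Finset.coe_image, Finset.coe_univ, Set.image_univ, hg.2]
  have hcard : (Finset.univ.image g).card ≤ Module.finrank (ZMod 2) G := by
    rw [← hg.2, finrank_span_eq_card hg.1]
    exact Finset.card_image_le
  have hbound : 2 * Fintype.card ι ≤ W * Module.finrank (ZMod 2) G := by
    rw [mul_comm W]
    exact two_mul_card_le_finrank_mul hd hlt hspan hcard
      (Finset.forall_mem_image.mpr fun i _ => hW i)
  exact div_le_of_le_mul₀ (Nat.cast_nonneg _) (Nat.cast_nonneg _) (by exact_mod_cast hbound)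

/-- any stabilizer group of dimension `n - k` with `k ≥ 1` (so `n > k`) and
distance at least `2` has weight at least `⌈2n/(n-k)⌉`; in particular
`W_opt(n,k,d) ≥ ⌈2n/(n-k)⌉` for all `d ≥ 2`. -/
theorem Wgt_lower_bound_ceil (n k : ℕ) (hk : 1 ≤ k) (hkn : k < n) :
    (∀ G : Submodule (ZMod 2) (Pauli n), IsStabilizer G →
        Module.finrank (ZMod 2) ↥G = n - k → 2 ≤ distG G →
        (⌈(2 * (n : ℚ)) / ((n : ℚ) - (k : ℚ))⌉₊ : ℕ∞) ≤ Wgt G) ∧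
    (∀ d : ℕ∞, 2 ≤ d →
        (⌈(2 * (n : ℚ)) / ((n : ℚ) - (k : ℚ))⌉₊ : ℕ∞) ≤ Wopt n k d) := by
  have key (G : Submodule (ZMod 2) (Pauli n)) (hr : Module.finrank (ZMod 2) G = n - k)
      (hd : 2 ≤ distG G) : (⌈(2 * (n : ℚ)) / ((n : ℚ) - (k : ℚ))⌉₊ : ℕ∞) ≤ Wgt G := by
    simpa only [Fintype.card_fin, hr, Nat.cast_sub hkn.le] using
      Wgt_lower_bound_ceil_general G (by rw [hr, Fintype.card_fin]; omega) hd
  exact ⟨fun G _ => key G, fun d hd => le_iInf₂ fun G hG => key G hG.2.1 (hG.2.2 ▸ hd)⟩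

end
end

section
/- Let G ⊆ P_n be a stabilizer group of dimension r and let S = {g_1, …, g_r} be a weight-optimal generating set of G. Then the maximum and average weight of S simultaneously attain their optimal values: max_{i} wt(g_i) = W(G) and (1/r)·Σ_i wt(g_i) = W^avg(G). -/
open scoped Classical

noncomputable section

variable {ι : Type} [Fintype ι]

/-! Sorting a basis by weight only permutes it, so it is again a basis of the same subspace and
optimality bounds a weight-optimal basis by it entry by entry. Maxima and averages are monotone and
invariant under permutation, so these entrywise bounds pass to both of them at once. -/

section BasisFam

variable {κ : Type} {G : Submodule (ZMod 2) (PauliT κ)} {r s : ℕ} {g : Fin r → PauliT κ}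

theorem IsBasisFam.finrank_eq (hg : IsBasisFam G g) : Module.finrank (ZMod 2) G = r := by
  rw [← hg.2, finrank_span_eq_card hg.1, Fintype.card_fin]

theorem IsBasisFam.comp_equiv (hg : IsBasisFam G g) (e : Fin s ≃ Fin r) :
    IsBasisFam G (g ∘ e) :=
  ⟨hg.1.comp e e.injective, by rw [e.surjective.range_comp, hg.2]⟩

end BasisFam

section WeightOptimal

variable {G : Submodule (ZMod 2) (PauliT ι)} {r s : ℕ} {g : Fin r → PauliT ι}
  {h : Fin s → PauliT ι}

theorem IsWeightOptimalBasis.exists_equiv_wt_le (hg : IsWeightOptimalBasis G g)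
    (hh : IsBasisFam G h) : ∃ e : Fin r ≃ Fin s, ∀ i, wt (g i) ≤ wt (h (e i)) := by
  obtain ⟨g_basis, -, g_le⟩ := hg
  obtain rfl : r = s := g_basis.finrank_eq.symm.trans hh.finrank_eq
  let e := Tuple.sort fun i => wt (h i)
  exact ⟨e, g_le (h ∘ e) (hh.comp_equiv e) (Tuple.monotone_sort fun i => wt (h i))⟩

theorem IsWeightOptimalBasis.sup_wt_le (hg : IsWeightOptimalBasis G g) (hh : IsBasisFam G h) :
    (Finset.univ.sup fun i => (wt (g i) : ℕ∞)) ≤ Finset.univ.sup fun i => (wt (h i) : ℕ∞) := by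
  obtain ⟨e, g_le⟩ := hg.exists_equiv_wt_le hh
  refine Finset.sup_le fun i _ => ?_
  calc (wt (g i) : ℕ∞)
      ≤ wt (h (e i)) := Nat.cast_le.mpr (g_le i)
    _ ≤ Finset.univ.sup fun j => (wt (h j) : ℕ∞) :=
        Finset.le_sup (f := fun j => (wt (h j) : ℕ∞)) (Finset.mem_univ (e i))

theorem IsWeightOptimalBasis.sum_wt_le (hg : IsWeightOptimalBasis G g) (hh : IsBasisFam G h) :
    ∑ i, wt (g i) ≤ ∑ i, wt (h i) := by
  obtain ⟨e, g_le⟩ := hg.exists_equiv_wt_le hh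
  calc ∑ i, wt (g i)
      ≤ ∑ i, wt (h (e i)) := Finset.sum_le_sum fun i _ => g_le i
    _ = ∑ i, wt (h i) := Equiv.sum_comp e fun i => wt (h i)

theorem IsWeightOptimalBasis.average_wt_le (hg : IsWeightOptimalBasis G g)
    (hh : IsBasisFam G h) :
    (∑ i, (wt (g i) : ℚ)) / (r : ℚ) ≤ (∑ i, (wt (h i) : ℚ)) / (s : ℚ) := by
  obtain rfl : r = s := hg.1.finrank_eq.symm.trans hh.finrank_eq
  have sum_le : ∑ i, (wt (g i) : ℚ) ≤ ∑ i, (wt (h i) : ℚ) := mod_cast hg.sum_wt_le hh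
  gcongr

theorem IsBasisFam.wgt_le_sup_wt (hg : IsBasisFam G g) :
    Wgt G ≤ Finset.univ.sup fun i => (wt (g i) : ℕ∞) :=
  iInf_le_of_le r (iInf₂_le g hg)

theorem IsWeightOptimalBasis.sup_wt_eq_wgt (hg : IsWeightOptimalBasis G g) :
    (Finset.univ.sup fun i => (wt (g i) : ℕ∞)) = Wgt G := by
  refine le_antisymm ?_ hg.1.wgt_le_sup_wt
  exact le_iInf fun s => le_iInf₂ fun h hh => hg.sup_wt_le hh

theorem IsWeightOptimalBasis.isLeast_average_wt (hg : IsWeightOptimalBasis G g) :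
    IsLeast (WavgSet G) ((∑ i, (wt (g i) : ℚ)) / (r : ℚ)) := by
  refine ⟨⟨r, g, hg.1, rfl⟩, ?_⟩
  rintro _ ⟨s, h, hh, rfl⟩
  exact hg.average_wt_le hh

theorem weightOptimal_attains_max_and_avg_general (hg : IsWeightOptimalBasis G g) :
    (Finset.univ.sup fun i => (wt (g i) : ℕ∞)) = Wgt G ∧
    IsLeast (WavgSet G) ((∑ i, (wt (g i) : ℚ)) / (r : ℚ)) :=
  ⟨hg.sup_wt_eq_wgt, hg.isLeast_average_wt⟩

end WeightOptimal

/-- a weight-optimal generating set simultaneously attains the optimal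
maximum weight `W(G)` and the optimal average weight `W^avg(G)`. -/
theorem weightOptimal_attains_max_and_avg (n r : ℕ) (G : Submodule (ZMod 2) (Pauli n))
    (hG : IsStabilizer G) (hdim : Module.finrank (ZMod 2) ↥G = r)
    (g : Fin r → Pauli n) (hopt : IsWeightOptimalBasis G g) :
    (Finset.univ.sup fun i => (wt (g i) : ℕ∞)) = Wgt G ∧
    IsLeast (WavgSet G) ((∑ i, (wt (g i) : ℚ)) / (r : ℚ)) :=
  weightOptimal_attains_max_and_avg_general hopt

end
end

section
/- Every stabilizer group G ⊆ P_12 of dimension 5 (i.e., on n = 12 qubits with k = 7 logical qubits) with distance d(G) ≥ 2 satisfies W(G) ≥ 6. In particular, W_opt(12, 7, 2) ≥ 6: there is no [[12,7,2]] stabilizer code all of whose checks can be chosen with weight at most 5. -/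
open scoped Classical

noncomputable section

variable {ι : Type} [Fintype ι]

/-! Suppose first that every single-qubit error is detected. Then every qubit is acted on by at
least two generators. If exactly two generators act on a qubit, they anticommute there; so a
generator all of whose qubits are of this kind has even weight, because it commutes with the
product of all generators. A generator of odd weight `2 * m + 1` must therefore touch a qubit on
which at least three generators act, and double counting the incidences between `r` generators and
`n` qubits gives `3 * n ≤ (3 * m + 1) * r`. For `n = 12`, `r = 5` and `m = 2` this reads `36 ≤ 35`.

In general, distance two forces every undetected single-qubit error to be a stabilizer. Deleting
the qubits carrying such a stabilizer lowers the dimension by at least the number of deleted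
qubits, keeps the group isotropic and leaves only detected single-qubit errors. The bound for the
remaining qubits implies the bound for all of them, because `3 ≤ 3 * m + 1` for `1 ≤ m`.
-/

section LocalForm

/-- The symplectic form of two single-qubit Pauli operators, that is, the contribution of one
qubit to `sympl`. -/
def localForm (p q : ZMod 2 × ZMod 2) : ZMod 2 := p.1 * q.2 + p.2 * q.1

lemma localForm_self (p : ZMod 2 × ZMod 2) : localForm p p = 0 := by
  revert p; decide

lemma localForm_zero_left (p : ZMod 2 × ZMod 2) : localForm 0 p = 0 := by
  simp [localForm]

lemma localForm_zero_right (p : ZMod 2 × ZMod 2) : localForm p 0 = 0 := by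
  simp [localForm]

lemma localForm_add_right (p q r : ZMod 2 × ZMod 2) :
    localForm p (q + r) = localForm p q + localForm p r := by
  simp only [localForm, Prod.fst_add, Prod.snd_add]; ring

lemma localForm_smul_right (c : ZMod 2) (p q : ZMod 2 × ZMod 2) :
    localForm p (c • q) = c * localForm p q := by
  simp only [localForm, Prod.smul_fst, Prod.smul_snd, smul_eq_mul]; ring

lemma localForm_eq_zero_of_common {p q r : ZMod 2 × ZMod 2} (hp : p ≠ 0)
    (hq : localForm p q = 0) (hr : localForm p r = 0) : localForm q r = 0 := by
  revert p q r; decide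

lemma sympl_eq_sum_localForm (u v : PauliT ι) : sympl u v = ∑ i, localForm (u i) (v i) := rfl

lemma sympl_single_left_s8 (i : ι) (p : ZMod 2 × ZMod 2) (v : PauliT ι) :
    sympl (Pi.single i p) v = localForm p (v i) := by
  rw [sympl_eq_sum_localForm, Finset.sum_eq_single i]
  · rw [Pi.single_eq_same]
  · intro j _ hj
    rw [Pi.single_eq_of_ne hj, localForm_zero_left]
  · simp

lemma wt_single_le_one (i : ι) (p : ZMod 2 × ZMod 2) : wt (Pi.single i p : PauliT ι) ≤ 1 := by
  refine (Finset.card_le_card (t := {i}) fun j hj => ?_).trans_eq (Finset.card_singleton i)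
  by_contra hji
  exact (Finset.mem_filter.mp hj).2 (by rw [Pi.single_eq_of_ne (Finset.notMem_singleton.mp hji)])

end LocalForm

section DetectsSingleErrors

variable {α : Type}

/-- Every nonidentity single-qubit Pauli error anticommutes with some element of `s`. For a
stabilizer group this says that the code is pure and detects all single-qubit errors. -/
def DetectsSingleErrors (s : Set (PauliT α)) : Prop :=
  ∀ i, ∀ p : ZMod 2 × ZMod 2, p ≠ 0 → ∃ g ∈ s, localForm p (g i) ≠ 0

lemma DetectsSingleErrors.of_span {s : Set (PauliT α)}
    (h : DetectsSingleErrors (Submodule.span (ZMod 2) s : Set (PauliT α))) :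
    DetectsSingleErrors s := by
  intro i p hp
  by_contra! hs
  have hspan : ∀ g ∈ Submodule.span (ZMod 2) s, localForm p (g i) = 0 := by
    intro g hg
    induction hg using Submodule.span_induction with
    | mem v hv => exact hs v hv
    | zero => exact localForm_zero_right p
    | add u v _ _ hu hv => rw [Pi.add_apply, localForm_add_right, hu, hv, add_zero]
    | smul c v _ hv => rw [Pi.smul_apply, localForm_smul_right, hv, mul_zero]
  obtain ⟨g, hg, hpg⟩ := h i p hp
  exact hpg (hspan g hg)

lemma DetectsSingleErrors.exists_anticommuting {κ : Type*} {g : κ → PauliT α}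
    (hg : DetectsSingleErrors (Set.range g)) {i : α} {j : κ} (hji : g j i ≠ 0) :
    ∃ k, j ≠ k ∧ g k i ≠ 0 ∧ localForm (g j i) (g k i) = 1 := by
  obtain ⟨_, ⟨k, rfl⟩, hk⟩ := hg i (g j i) hji
  refine ⟨k, ?_, ?_, Fin.eq_one_of_ne_zero _ hk⟩
  · exact fun h => hk (by rw [h, localForm_self])
  · exact fun h => hk (by rw [h, localForm_zero_right])

end DetectsSingleErrors

section ColumnCounting

variable {κ : Type*} [Fintype κ] {α : Type}

/-- The number of members of the family `g` that act nontrivially on qubit `i`. -/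
def colCount (g : κ → PauliT α) (i : α) : ℕ := (Finset.univ.filter fun j => g j i ≠ 0).card

lemma sum_wt_eq_sum_colCount (g : κ → PauliT ι) : ∑ j, wt (g j) = ∑ i, colCount g i :=
  Finset.sum_card_bipartiteAbove_eq_sum_card_bipartiteBelow fun j i => g j i ≠ 0

lemma two_le_colCount {g : κ → PauliT α} (hg : DetectsSingleErrors (Set.range g)) (i : α) :
    2 ≤ colCount g i := by
  obtain ⟨_, ⟨j, rfl⟩, hj⟩ := hg i (1, 0) (by decide)
  have hji : g j i ≠ 0 := fun h => hj (by rw [h, localForm_zero_right])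
  obtain ⟨k, hjk, hki, -⟩ := hg.exists_anticommuting hji
  exact Finset.one_lt_card.mpr ⟨j, by simpa using hji, k, by simpa using hki, hjk⟩

lemma sum_localForm_eq_one {g : κ → PauliT α} (hg : DetectsSingleErrors (Set.range g))
    {i : α} {j : κ} (hji : g j i ≠ 0) (hi : colCount g i = 2) :
    ∑ k, localForm (g j i) (g k i) = 1 := by
  obtain ⟨k, hjk, hki, hone⟩ := hg.exists_anticommuting hji
  have hpair : {j, k} = Finset.univ.filter fun l => g l i ≠ 0 := by
    refine Finset.eq_of_subset_of_card_le ?_ (hi.trans (Finset.card_pair hjk).symm).le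
    simp [Finset.insert_subset_iff, hji, hki]
  have hout : ∀ l ∉ ({j, k} : Finset κ), localForm (g j i) (g l i) = 0 := by
    intro l hl
    have hli : g l i = 0 := by simpa [hpair] using hl
    rw [hli, localForm_zero_right]
  rw [← Finset.sum_subset (Finset.subset_univ {j, k}) fun l _ hl => hout l hl,
    Finset.sum_pair hjk, localForm_self, zero_add, hone]

lemma even_wt_of_colCount_eq_two {g : κ → PauliT ι} (hcomm : ∀ j k, sympl (g j) (g k) = 0)
    (hg : DetectsSingleErrors (Set.range g)) {j : κ}
    (hj : ∀ i, g j i ≠ 0 → colCount g i = 2) : Even (wt (g j)) := by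
  rw [even_iff_two_dvd, ← ZMod.natCast_eq_zero_iff]
  calc ((wt (g j) : ℕ) : ZMod 2)
      = ∑ i, if g j i ≠ 0 then 1 else 0 := by rw [wt, Finset.natCast_card_filter]
    _ = ∑ i, ∑ k, localForm (g j i) (g k i) := by
        refine Finset.sum_congr rfl fun i _ => ?_
        split_ifs with hji
        · exact (sum_localForm_eq_one hg hji (hj i hji)).symm
        · simp only [not_not.mp hji, localForm_zero_left, Finset.sum_const_zero]
    _ = ∑ k, sympl (g j) (g k) := Finset.sum_comm
    _ = 0 := Finset.sum_eq_zero fun k _ => hcomm j k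

/-- The members of the family `g` that act on some qubit together with at least two others. -/
def crowdedMembers (g : κ → PauliT α) : Finset κ :=
  Finset.univ.filter fun j => ∃ i, g j i ≠ 0 ∧ 3 ≤ colCount g i

lemma wt_le_of_notMem_crowdedMembers {m : ℕ} {g : κ → PauliT ι}
    (hcomm : ∀ j k, sympl (g j) (g k) = 0) (hg : DetectsSingleErrors (Set.range g)) {j : κ}
    (hwt : wt (g j) ≤ 2 * m + 1) (hj : j ∉ crowdedMembers g) : wt (g j) ≤ 2 * m := by
  have hcol : ∀ i, g j i ≠ 0 → colCount g i = 2 := by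
    intro i hji
    have hlt : ¬ 3 ≤ colCount g i := fun h =>
      hj (by simpa [crowdedMembers] using ⟨i, hji, h⟩)
    have := two_le_colCount hg i
    omega
  obtain ⟨a, ha⟩ := even_wt_of_colCount_eq_two hcomm hg hcol
  omega

lemma card_crowdedMembers_add_le {g : κ → PauliT ι} (hg : ∀ i, 2 ≤ colCount g i) :
    (crowdedMembers g).card + 6 * Fintype.card ι ≤ 3 * ∑ i, colCount g i := by
  have hcover : crowdedMembers g ⊆ Finset.univ.biUnion fun i =>
      Finset.univ.filter fun j => g j i ≠ 0 ∧ 3 ≤ colCount g i := by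
    intro j hj
    simpa [crowdedMembers] using hj
  have hcol : ∀ i, (Finset.univ.filter fun j => g j i ≠ 0 ∧ 3 ≤ colCount g i).card + 6
      ≤ 3 * colCount g i := by
    intro i
    have hle : (Finset.univ.filter fun j => g j i ≠ 0 ∧ 3 ≤ colCount g i).card
        ≤ colCount g i :=
      Finset.card_le_card (Finset.monotone_filter_right _ fun _ _ h => h.1)
    by_cases h3 : 3 ≤ colCount g i
    · omega
    · simp only [h3, and_false, Finset.filter_false, Finset.card_empty]
      have := hg i
      omega
  calc (crowdedMembers g).card + 6 * Fintype.card ι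
      ≤ ∑ i, (Finset.univ.filter fun j => g j i ≠ 0 ∧ 3 ≤ colCount g i).card
          + ∑ _i : ι, 6 := by
        refine Nat.add_le_add
          ((Finset.card_le_card hcover).trans Finset.card_biUnion_le) (le_of_eq ?_)
        rw [Finset.sum_const, Finset.card_univ, smul_eq_mul, mul_comm]
    _ ≤ 3 * ∑ i, colCount g i := by
        rw [← Finset.sum_add_distrib, Finset.mul_sum]
        exact Finset.sum_le_sum fun i _ => hcol i

lemma three_mul_card_qubits_le_of_family {m : ℕ} {g : κ → PauliT ι}
    (hcomm : ∀ j k, sympl (g j) (g k) = 0) (hg : DetectsSingleErrors (Set.range g))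
    (hwt : ∀ j, wt (g j) ≤ 2 * m + 1) :
    3 * Fintype.card ι ≤ (3 * m + 1) * Fintype.card κ := by
  have htotal : ∑ j, wt (g j) ≤ Fintype.card κ * (2 * m + 1) :=
    Finset.sum_le_card_nsmul _ _ _ fun j _ => hwt j
  have hparity : ∑ j, wt (g j) ≤ Fintype.card κ * (2 * m) + (crowdedMembers g).card := by
    calc ∑ j, wt (g j)
        ≤ ∑ j, (2 * m + if j ∈ crowdedMembers g then 1 else 0) := by
          refine Finset.sum_le_sum fun j _ => ?_
          split_ifs with hj
          · exact hwt j
          · exact wt_le_of_notMem_crowdedMembers hcomm hg (hwt j) hj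
      _ = Fintype.card κ * (2 * m) + (crowdedMembers g).card := by
          simp [Finset.sum_add_distrib]
  have hcrowded := card_crowdedMembers_add_le (two_le_colCount hg)
  rw [← sum_wt_eq_sum_colCount] at hcrowded
  linarith

end ColumnCounting

lemma three_mul_card_qubits_le_of_detects {m : ℕ} {s : Set (PauliT ι)}
    (hstab : IsStabilizer (Submodule.span (ZMod 2) s))
    (hdet : DetectsSingleErrors (Submodule.span (ZMod 2) s : Set (PauliT ι)))
    (hwt : ∀ v ∈ s, wt v ≤ 2 * m + 1) :
    3 * Fintype.card ι ≤ (3 * m + 1) * Module.finrank (ZMod 2) (Submodule.span (ZMod 2) s) := by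
  obtain ⟨b, hbs, hspan, hli⟩ := exists_linearIndependent (ZMod 2) s
  have hcard : Module.finrank (ZMod 2) (Submodule.span (ZMod 2) s) = Fintype.card b := by
    rw [← hspan, ← finrank_span_eq_card hli, Subtype.range_coe]
  rw [← hspan] at hdet
  rw [hcard]
  refine three_mul_card_qubits_le_of_family (g := ((↑) : b → PauliT ι)) (fun u v => ?_) ?_
    fun v => hwt v (hbs v.2)
  · exact hstab _ (Submodule.subset_span (hbs u.2)) _ (Submodule.subset_span (hbs v.2))
  · rw [Subtype.range_coe]
    exact hdet.of_span

section FixedQubits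

variable {α : Type}

/-- `G` contains a weight-one stabilizer supported on qubit `i`, so that the state of this qubit
is fixed by the code. -/
def IsFixedQubit (G : Submodule (ZMod 2) (PauliT α)) (i : α) : Prop :=
  ∃ p : ZMod 2 × ZMod 2, p ≠ 0 ∧ Pi.single i p ∈ G

/-- Restriction of Pauli strings to the qubits that are not fixed by `G`. -/
def eraseFixed (G : Submodule (ZMod 2) (PauliT α)) :
    PauliT α →ₗ[ZMod 2] PauliT {i // ¬ IsFixedQubit G i} :=
  LinearMap.funLeft (ZMod 2) (ZMod 2 × ZMod 2) Subtype.val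

lemma wt_eraseFixed_le (G : Submodule (ZMod 2) (PauliT ι)) (v : PauliT ι) :
    wt (eraseFixed G v) ≤ wt v := by
  refine Finset.card_le_card_of_injOn Subtype.val (fun i hi => ?_) Subtype.val_injective.injOn
  exact Finset.mem_filter.mpr ⟨Finset.mem_univ _, (Finset.mem_filter.mp hi).2⟩

lemma IsStabilizer.localForm_eq_zero {G : Submodule (ZMod 2) (PauliT ι)} (hG : IsStabilizer G)
    {i : ι} (hi : IsFixedQubit G i) {u v : PauliT ι} (hu : u ∈ G) (hv : v ∈ G) :
    localForm (u i) (v i) = 0 := by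
  obtain ⟨p, hp, hpG⟩ := hi
  refine localForm_eq_zero_of_common hp ?_ ?_
  · rw [← sympl_single_left_s8, hG _ hpG u hu]
  · rw [← sympl_single_left_s8, hG _ hpG v hv]

lemma IsStabilizer.map_eraseFixed {G : Submodule (ZMod 2) (PauliT ι)} (hG : IsStabilizer G) :
    IsStabilizer (G.map (eraseFixed G)) := by
  rintro _ ⟨u, hu, rfl⟩ _ ⟨v, hv, rfl⟩
  rw [← hG u hu v hv, sympl_eq_sum_localForm u v,
    ← Fintype.sum_subtype_add_sum_subtype (IsFixedQubit G),
    Finset.sum_eq_zero fun i _ => hG.localForm_eq_zero i.2 hu hv, zero_add]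
  rfl

lemma mem_of_inDual_of_wt_le_one {G : Submodule (ZMod 2) (PauliT ι)} (hd : 2 ≤ distG G)
    {v : PauliT ι} (hv : inDual G v) (hwt : wt v ≤ 1) : v ∈ G := by
  by_contra hvG
  have h2 : (2 : ℕ∞) ≤ wt v := hd.trans (sInf_le ⟨v, ⟨hv, hvG⟩, rfl⟩)
  have : 2 ≤ wt v := by exact_mod_cast h2
  omega

lemma detectsSingleErrors_map_eraseFixed {G : Submodule (ZMod 2) (PauliT ι)}
    (hd : 2 ≤ distG G) :
    DetectsSingleErrors (G.map (eraseFixed G) : Set (PauliT {i // ¬ IsFixedQubit G i})) := by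
  rintro ⟨i, hi⟩ p hp
  by_contra! hcomm
  have hdual : inDual G (Pi.single i p) := fun g hg =>
    (sympl_single_left_s8 i p g).trans (hcomm _ (Submodule.mem_map_of_mem hg))
  exact hi ⟨p, hp, mem_of_inDual_of_wt_le_one hd hdual (wt_single_le_one i p)⟩

lemma finrank_map_eraseFixed_add_le (G : Submodule (ZMod 2) (PauliT ι)) :
    Module.finrank (ZMod 2) (G.map (eraseFixed G)) + Fintype.card {i // IsFixedQubit G i}
      ≤ Module.finrank (ZMod 2) G := by
  have hfixed (i : ι) : ∃ p : ZMod 2 × ZMod 2, p ≠ 0 ∧ (IsFixedQubit G i → Pi.single i p ∈ G) := by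
    by_cases hi : IsFixedQubit G i
    · exact hi.imp fun p hp => ⟨hp.1, fun _ => hp.2⟩
    · exact ⟨(1, 0), by decide, fun h => absurd h hi⟩
  choose p hp hpG using hfixed
  have hker (i : {i // IsFixedQubit G i}) :
      (⟨Pi.single i.1 (p i), hpG i i.2⟩ : G) ∈ LinearMap.ker ((eraseFixed G).domRestrict G) := by
    refine LinearMap.mem_ker.mpr (funext fun j => ?_)
    have hji : j.1 ≠ i.1 := fun h => j.2 (h ▸ i.2)
    simp [eraseFixed, LinearMap.funLeft_apply, Pi.single_eq_of_ne hji]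
  have hli : LinearIndependent (ZMod 2)
      fun i => (⟨_, hker i⟩ : LinearMap.ker ((eraseFixed G).domRestrict G)) :=
    .of_comp (G.subtype ∘ₗ Submodule.subtype _) <|
      (Pi.linearIndependent_single_of_ne_zero hp).comp _ Subtype.val_injective
  rw [← LinearMap.finrank_range_add_finrank_ker ((eraseFixed G).domRestrict G),
    LinearMap.range_domRestrict]
  exact Nat.add_le_add_left hli.fintype_card_le_finrank _

end FixedQubits

lemma three_mul_card_qubits_le {m : ℕ} (hm : 1 ≤ m) {s : Set (PauliT ι)}
    (hstab : IsStabilizer (Submodule.span (ZMod 2) s))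
    (hd : 2 ≤ distG (Submodule.span (ZMod 2) s)) (hwt : ∀ v ∈ s, wt v ≤ 2 * m + 1) :
    3 * Fintype.card ι ≤ (3 * m + 1) * Module.finrank (ZMod 2) (Submodule.span (ZMod 2) s) := by
  set G := Submodule.span (ZMod 2) s
  have hmap : G.map (eraseFixed G) = Submodule.span (ZMod 2) (eraseFixed G '' s) :=
    Submodule.map_span _ s
  have hrest : 3 * Fintype.card {i // ¬ IsFixedQubit G i}
      ≤ (3 * m + 1) * Module.finrank (ZMod 2) (G.map (eraseFixed G)) := by
    rw [hmap]
    refine three_mul_card_qubits_le_of_detects (hmap ▸ hstab.map_eraseFixed)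
      (hmap ▸ detectsSingleErrors_map_eraseFixed hd) ?_
    rintro _ ⟨v, hv, rfl⟩
    exact (wt_eraseFixed_le G v).trans (hwt v hv)
  have hcard : Fintype.card {i // IsFixedQubit G i} + Fintype.card {i // ¬ IsFixedQubit G i}
      = Fintype.card ι := by
    rw [← Fintype.card_sum, Fintype.card_congr (Equiv.sumCompl (IsFixedQubit G))]
  calc 3 * Fintype.card ι
      = 3 * Fintype.card {i // ¬ IsFixedQubit G i} + 3 * Fintype.card {i // IsFixedQubit G i} := by
        rw [← hcard, mul_add, add_comm]
    _ ≤ (3 * m + 1) * Module.finrank (ZMod 2) (G.map (eraseFixed G))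
          + (3 * m + 1) * Fintype.card {i // IsFixedQubit G i} :=
        Nat.add_le_add hrest (Nat.mul_le_mul_right _ (by omega))
    _ ≤ (3 * m + 1) * Module.finrank (ZMod 2) G := by
        rw [← mul_add]
        exact Nat.mul_le_mul_left _ (finrank_map_eraseFixed_add_le G)

lemma exists_isBasisFam_of_Wgt_lt {G : Submodule (ZMod 2) (PauliT ι)} {w : ℕ}
    (h : Wgt G < w) :
    ∃ (r : ℕ) (g : Fin r → PauliT ι), IsBasisFam G g ∧ ∀ j, wt (g j) < w := by
  simp only [Wgt, iInf_lt_iff] at h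
  obtain ⟨r, g, hg, hlt⟩ := h
  refine ⟨r, g, hg, fun j => ?_⟩
  exact_mod_cast (Finset.le_sup (f := fun j => (wt (g j) : ℕ∞)) (Finset.mem_univ j)).trans_lt hlt

lemma two_mul_add_two_le_Wgt {m : ℕ} (hm : 1 ≤ m) {G : Submodule (ZMod 2) (PauliT ι)}
    (hG : IsStabilizer G) (hd : 2 ≤ distG G)
    (hlt : (3 * m + 1) * Module.finrank (ZMod 2) G < 3 * Fintype.card ι) :
    ((2 * m + 2 : ℕ) : ℕ∞) ≤ Wgt G := by
  by_contra! hW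
  obtain ⟨r, g, ⟨-, rfl⟩, hwt⟩ := exists_isBasisFam_of_Wgt_lt hW
  refine hlt.not_ge (three_mul_card_qubits_le hm hG hd ?_)
  rintro _ ⟨j, rfl⟩
  exact Nat.le_of_lt_succ (hwt j)

theorem Wopt_12_7_2_lower_bound_general {k r m : ℕ} {d : ℕ∞} (hm : 1 ≤ m) (hd : 2 ≤ d)
    (hlt : (3 * m + 1) * r < 3 * (k + r)) :
    (∀ G : Submodule (ZMod 2) (Pauli (k + r)), IsStabilizer G →
        Module.finrank (ZMod 2) ↥G = r → 2 ≤ distG G → ((2 * m + 2 : ℕ) : ℕ∞) ≤ Wgt G) ∧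
    ((2 * m + 2 : ℕ) : ℕ∞) ≤ Wopt (k + r) k d := by
  have hWgt (G : Submodule (ZMod 2) (Pauli (k + r))) (hG : IsStabilizer G)
      (hr : Module.finrank (ZMod 2) ↥G = r) (hdist : 2 ≤ distG G) :
      ((2 * m + 2 : ℕ) : ℕ∞) ≤ Wgt G :=
    two_mul_add_two_le_Wgt hm hG hdist (by rwa [hr, Fintype.card_fin])
  refine ⟨hWgt, le_iInf₂ fun G ⟨hG, hr, hdist⟩ => hWgt G hG ?_ (hdist ▸ hd)⟩
  rwa [Nat.add_sub_cancel_left] at hr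

/-- every stabilizer group on `12` qubits of dimension `5` with distance
at least `2` has weight at least `6`; in particular `W_opt(12,7,2) ≥ 6`. -/
theorem Wopt_12_7_2_lower_bound :
    (∀ G : Submodule (ZMod 2) (Pauli 12), IsStabilizer G →
        Module.finrank (ZMod 2) ↥G = 5 → 2 ≤ distG G → 6 ≤ Wgt G) ∧
    6 ≤ Wopt 12 7 2 :=
  Wopt_12_7_2_lower_bound_general (k := 7) (r := 5) (m := 2) (by norm_num) le_rfl (by norm_num)

end
end
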